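/- For any monoids S₁, S₂ and S₃, the wreath product (S₃ ≀ S₂) ≀ S₁ is isomorphic to a submonoid of S₃ ≀ (S₂ ≀ S₁). -/

import Mathlib

/-- The wreath product `S ≀ T` of monoids: underlying set `S^T × T = (T → S) × T`, with
multiplication `(f, a)(g, b) = (f · ᵃg, ab)` where `t (ᵃg) = g (t * a)`
(functions are applied on the right, and `T` acts on `S^T` by `t₂(^{t₁}f) = (t₂t₁)f`). -/
def WreathProduct (S T : Type*) [Monoid S] [Monoid T] : Type _ := (T → S) × T

instance WreathProduct.instMonoid (S T : Type*) [Monoid S] [Monoid T] :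
    Monoid (WreathProduct S T) where
  mul x y := (fun t => x.1 t * y.1 (t * x.2), x.2 * y.2)
  one := (fun _ => 1, 1)
  mul_assoc x y z := by
    refine Prod.ext (funext fun t => ?_) (mul_assoc _ _ _)
    show x.1 t * y.1 (t * x.2) * z.1 (t * (x.2 * y.2)) =
      x.1 t * (y.1 (t * x.2) * z.1 (t * x.2 * y.2))
    rw [mul_assoc, mul_assoc]
  one_mul x := by
    refine Prod.ext (funext fun t => ?_) (one_mul _)
    show 1 * x.1 (t * 1) = x.1 t
    rw [one_mul, mul_one]
  mul_one x := by
    refine Prod.ext (funext fun t => ?_) (mul_one _)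
    show x.1 t * 1 = x.1 t
    rw [mul_one]

namespace WreathProduct

variable {R S T : Type*} [Monoid R] [Monoid S] [Monoid T]

/-- The element of `S ≀ T` with given components; with `left` and `right` it keeps the encoding as
a product type out of the proofs. -/
def mk (f : T → S) (a : T) : WreathProduct S T := (f, a)

/-- The component in `S^T` of an element of `S ≀ T`. -/
def left (x : WreathProduct S T) : T → S := x.1

/-- The component in `T` of an element of `S ≀ T`. -/
def right (x : WreathProduct S T) : T := x.2

@[simp] theorem left_mk (f : T → S) (a : T) : (mk f a).left = f := rfl

@[simp] theorem right_mk (f : T → S) (a : T) : (mk f a).right = a := rfl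

@[simp] theorem left_one_apply (t : T) : (1 : WreathProduct S T).left t = 1 := rfl

@[simp] theorem right_one : (1 : WreathProduct S T).right = 1 := rfl

@[simp] theorem left_mul_apply (x y : WreathProduct S T) (t : T) :
    (x * y).left t = x.left t * y.left (t * x.right) := rfl

@[simp] theorem right_mul (x y : WreathProduct S T) : (x * y).right = x.right * y.right := rfl

@[ext] theorem ext {x y : WreathProduct S T} (left : ∀ t, x.left t = y.left t)
    (right : x.right = y.right) : x = y :=
  Prod.ext (funext left) right

/-- The canonical projection `S ≀ T → T`. -/
def rightHom : WreathProduct S T →* T where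
  toFun := right
  map_one' := right_one
  map_mul' := right_mul

@[simp] theorem rightHom_apply (x : WreathProduct S T) : rightHom x = x.right := rfl

/-- Functoriality of `S ≀ T` in `S`: a homomorphism `R → S` is applied to every value of the
function component. -/
def map (f : R →* S) : WreathProduct R T →* WreathProduct S T where
  toFun x := mk (fun t => f (x.left t)) x.right
  map_one' := by ext <;> simp
  map_mul' x y := by ext <;> simp

@[simp] theorem left_map_apply (f : R →* S) (x : WreathProduct R T) (t : T) :
    (map f x).left t = f (x.left t) := rfl

@[simp] theorem right_map (f : R →* S) (x : WreathProduct R T) : (map f x).right = x.right := rfl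

/-- The orbit map of `(1, 1)` for the right action `(s, t) · (f, a) = (s * f t, t * a)` of `S ≀ T`
on `S × T`. -/
def orbitMap (w : WreathProduct S T) : S × T := (w.left 1, w.right)

theorem orbitMap_mul (w v : WreathProduct S T) :
    orbitMap (w * v) =
      ((orbitMap w).1 * v.left (orbitMap w).2, (orbitMap w).2 * v.right) := by
  simp [orbitMap]

theorem orbitMap_surjective : Function.Surjective (orbitMap : WreathProduct S T → S × T) :=
  fun p => ⟨mk (fun _ => p.1) p.2, rfl⟩

/-- The comparison homomorphism `(R ≀ S) ≀ T → R ≀ (S ≀ T)`. An element of `(R ≀ S) ≀ T` amounts to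
a function `S × T → R` together with an element of `S ≀ T`; the function is pulled back to `S ≀ T`
along `orbitMap`, whose equivariance makes the result multiplicative. -/
def assocHom : WreathProduct (WreathProduct R S) T →* WreathProduct R (WreathProduct S T) where
  toFun x := mk (fun w => (x.left (orbitMap w).2).left (orbitMap w).1) (map rightHom x)
  map_one' := by ext <;> simp
  map_mul' x y := by ext <;> simp [orbitMap_mul]

theorem left_assocHom_apply (x : WreathProduct (WreathProduct R S) T) (w : WreathProduct S T) :
    (assocHom x).left w = (x.left (orbitMap w).2).left (orbitMap w).1 := rfl

theorem right_assocHom (x : WreathProduct (WreathProduct R S) T) :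
    (assocHom x).right = map rightHom x := rfl

theorem assocHom_injective :
    Function.Injective
      (assocHom : WreathProduct (WreathProduct R S) T →* WreathProduct R (WreathProduct S T)) := by
  intro x y h
  have map_eq : map rightHom x = map rightHom y := by
    simpa only [right_assocHom] using congrArg right h
  ext t s
  · obtain ⟨w, hw⟩ := orbitMap_surjective (s, t)
    simpa only [left_assocHom_apply, hw] using congrArg (fun z => z.left w) h
  · simpa only [left_map_apply, rightHom_apply] using congrArg (fun z => z.left t) map_eq
  · simpa only [right_map] using congrArg right map_eq

end WreathProduct

/-- For monoids `S₁`, `S₂`, `S₃`, the wreath product `(S₃ ≀ S₂) ≀ S₁`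
is isomorphic to a submonoid of `S₃ ≀ (S₂ ≀ S₁)`, i.e. there is an injective monoid
homomorphism `(S₃ ≀ S₂) ≀ S₁ → S₃ ≀ (S₂ ≀ S₁)`. -/
theorem wreath_assoc_embed (S₁ S₂ S₃ : Type*) [Monoid S₁] [Monoid S₂] [Monoid S₃] :
    ∃ φ : WreathProduct (WreathProduct S₃ S₂) S₁ →*
        WreathProduct S₃ (WreathProduct S₂ S₁),
      Function.Injective φ :=
  ⟨WreathProduct.assocHom, WreathProduct.assocHom_injective⟩
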